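/- arXiv:2305.00968 — 2 statements merged into one kernel-verified Lean document; each statement's English description precedes it below -/
import Mathlib

section
/- For every countable ordinal α < ω₁ there exists an ordinal β < ω^ω · 2 (ordinal arithmetic, i.e., β < ω^ω + ω^ω) such that α and β have the same monadic second-order theory as linear orders. Concretely: writing α = ω^ω · α₁ + α₂ with α₂ < ω^ω, the ordinal ω^ω + α₂ (when α₁ ≥ 1) satisfies exactly the same monadic sentences as α. -/
/-- Monadic second-order formulas over a linear order with `m` unary predicates,
`k` free element variables and `l` free set variables (de Bruijn indexed). -/
inductive MSO (m : ℕ) : ℕ → ℕ → Type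
  | lt {k l : ℕ} (i j : Fin k) : MSO m k l
  | eq {k l : ℕ} (i j : Fin k) : MSO m k l
  | mem {k l : ℕ} (i : Fin k) (X : Fin l) : MSO m k l
  | pred {k l : ℕ} (p : Fin m) (i : Fin k) : MSO m k l
  | not {k l : ℕ} (φ : MSO m k l) : MSO m k l
  | and {k l : ℕ} (φ ψ : MSO m k l) : MSO m k l
  | exElem {k l : ℕ} (φ : MSO m (k + 1) l) : MSO m k l
  | exSet {k l : ℕ} (φ : MSO m k (l + 1)) : MSO m k l

/-- Satisfaction of an MSO formula in a linear order `α` with unary predicates `P`. -/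
def MSO.Sat {m : ℕ} {α : Type*} [LinearOrder α] (P : Fin m → Set α) :
    ∀ {k l : ℕ}, MSO m k l → (Fin k → α) → (Fin l → Set α) → Prop
  | _, _, .lt i j, e, _ => e i < e j
  | _, _, .eq i j, e, _ => e i = e j
  | _, _, .mem i X, e, s => e i ∈ s X
  | _, _, .pred p i, e, _ => e i ∈ P p
  | _, _, .not φ, e, s => ¬ φ.Sat P e s
  | _, _, .and φ ψ, e, s => φ.Sat P e s ∧ ψ.Sat P e s
  | _, _, .exElem φ, e, s => ∃ a : α, φ.Sat P (Fin.cons a e) s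
  | _, _, .exSet φ, e, s => ∃ A : Set α, φ.Sat P e (Fin.cons A s)

/-- Quantifier depth of an MSO formula. -/
def MSO.depth {m : ℕ} : ∀ {k l : ℕ}, MSO m k l → ℕ
  | _, _, .not φ => φ.depth
  | _, _, .and φ ψ => max φ.depth ψ.depth
  | _, _, .exElem φ => φ.depth + 1
  | _, _, .exSet φ => φ.depth + 1
  | _, _, _ => 0

/-- Satisfaction of an MSO sentence (no free variables). -/
def MSO.SatS {m : ℕ} {α : Type*} [LinearOrder α] (P : Fin m → Set α) (φ : MSO m 0 0) : Prop :=
  φ.Sat P (fun i => i.elim0) (fun i => i.elim0)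

/-- Two ordinals, viewed as linear orders, satisfy the same monadic sentences. -/
def OrdMSOEquiv (a b : Ordinal) : Prop :=
  ∀ φ : MSO 0 0 0,
    MSO.SatS (α := ↥(Set.Iio a)) (fun p => p.elim0) φ ↔
    MSO.SatS (α := ↥(Set.Iio b)) (fun p => p.elim0) φ

/-!
For every `n` there are only finitely many possible depth-`n` monadic theories, and the depth-`n`
theory of an ordered sum is determined by those of its summands (Feferman–Vaught, Shelah). Two
powers `ω ^ i` and `ω ^ j` with `i + 1 < j` therefore have the same depth-`n` theory; since
`ω ^ (i + 1) + ω ^ j = ω ^ j` and `(ω ^ (i + 1) + ω ^ i) * ω = ω ^ (i + 1) * ω`, the ordinal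
`b = ω ^ (i + 1)` is then `n`-equivalent to `b * ω`. By induction `b` is `n`-equivalent to `b * a`
for every countable `a ≠ 0`, because a countable limit ordinal is an `ω`-sum of smaller nonzero
ordinals. As `b` absorbs into `ω ^ ω` from the left, `ω ^ ω * α₁ = b * (ω ^ ω * α₁)` and
`ω ^ ω = b * ω ^ ω` are both `n`-equivalent to `b`.
-/

/-- The codomain of `hintikkaType`: types of quantifier depth `n` of an order with `l` named
subsets. -/
def HintikkaType : ℕ → ℕ → Type
  | 0, l => Set (Fin l × Fin l) × Set (Fin l × Fin l)
  | n + 1, l => Set (HintikkaType n (l + 1))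

instance HintikkaType.instFinite : ∀ n l : ℕ, Finite (HintikkaType n l)
  | 0, l => inferInstanceAs (Finite (Set (Fin l × Fin l) × Set (Fin l × Fin l)))
  | n + 1, l =>
    have := HintikkaType.instFinite n (l + 1)
    inferInstanceAs (Finite (Set (HintikkaType n (l + 1))))

section HintikkaType

variable {A B : Type*} [LinearOrder A] [LinearOrder B] {n l : ℕ}

/-- The monadic Hintikka type of depth `n` of a linear order with named subsets `s`. Elements are
treated as singletons, so that only set quantifiers occur; depth `0` records which named sets meet
and which contain elements in increasing order. -/
def hintikkaType : ∀ (n : ℕ) {l : ℕ}, (Fin l → Set A) → HintikkaType n l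
  | 0, _, s => ({p | (s p.1 ∩ s p.2).Nonempty}, {p | ∃ x ∈ s p.1, ∃ y ∈ s p.2, x < y})
  | n + 1, _, s => Set.range fun S : Set A => hintikkaType n (Matrix.vecCons S s)

theorem hintikkaType_zero_eq_iff {s : Fin l → Set A} {t : Fin l → Set B} :
    hintikkaType 0 s = hintikkaType 0 t ↔
      (∀ i j, (s i ∩ s j).Nonempty ↔ (t i ∩ t j).Nonempty) ∧
      ∀ i j, (∃ x ∈ s i, ∃ y ∈ s j, x < y) ↔ ∃ x ∈ t i, ∃ y ∈ t j, x < y := by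
  simp only [hintikkaType, HintikkaType, Prod.mk.injEq, Set.ext_iff, Prod.forall, Set.mem_ofPred_eq]

theorem hintikkaType_succ_eq_iff {s : Fin l → Set A} {t : Fin l → Set B} :
    hintikkaType (n + 1) s = hintikkaType (n + 1) t ↔
      (∀ S, ∃ T, hintikkaType n (Matrix.vecCons S s) = hintikkaType n (Matrix.vecCons T t)) ∧
      ∀ T, ∃ S, hintikkaType n (Matrix.vecCons S s) = hintikkaType n (Matrix.vecCons T t) := by
  simp only [hintikkaType, HintikkaType, Set.Subset.antisymm_iff, Set.range_subset_iff,
    Set.mem_range, eq_comm]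

theorem hintikkaType_zero_eq_of_eq {s : Fin l → Set A} {t : Fin l → Set B}
    (h : hintikkaType n s = hintikkaType n t) : hintikkaType 0 s = hintikkaType 0 t := by
  induction n generalizing l with
  | zero => exact h
  | succ n ih =>
    obtain ⟨T, hT⟩ := (hintikkaType_succ_eq_iff.1 h).1 ∅
    obtain ⟨hinter, hlt⟩ := hintikkaType_zero_eq_iff.1 (ih hT)
    exact hintikkaType_zero_eq_iff.2
      ⟨fun i j => hinter i.succ j.succ, fun i j => hlt i.succ j.succ⟩

theorem inter_nonempty_iff_of_hintikkaType_eq {s : Fin l → Set A} {t : Fin l → Set B}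
    (h : hintikkaType n s = hintikkaType n t) (i j : Fin l) :
    (s i ∩ s j).Nonempty ↔ (t i ∩ t j).Nonempty :=
  (hintikkaType_zero_eq_iff.1 (hintikkaType_zero_eq_of_eq h)).1 i j

theorem exists_lt_iff_of_hintikkaType_eq {s : Fin l → Set A} {t : Fin l → Set B}
    (h : hintikkaType n s = hintikkaType n t) (i j : Fin l) :
    (∃ x ∈ s i, ∃ y ∈ s j, x < y) ↔ ∃ x ∈ t i, ∃ y ∈ t j, x < y :=
  (hintikkaType_zero_eq_iff.1 (hintikkaType_zero_eq_of_eq h)).2 i j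

theorem exists_eq_singleton_iff_nonempty_not_exists_lt {S : Set A} :
    (∃ a, S = {a}) ↔ (S ∩ S).Nonempty ∧ ¬ ∃ x ∈ S, ∃ y ∈ S, x < y := by
  rw [Set.inter_self, Set.exists_eq_singleton_iff_nonempty_subsingleton]
  refine and_congr_right fun _ => ⟨?_, fun h x hx y hy => ?_⟩
  · rintro h ⟨x, hx, y, hy, hxy⟩
    exact hxy.ne (h hx hy)
  · exact le_antisymm (not_lt.1 fun hyx => h ⟨y, hy, x, hx, hyx⟩)
      (not_lt.1 fun hxy => h ⟨x, hx, y, hy, hxy⟩)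

theorem exists_eq_singleton_iff_of_hintikkaType_eq {s : Fin l → Set A} {t : Fin l → Set B}
    (h : hintikkaType n s = hintikkaType n t) (i : Fin l) :
    (∃ a, s i = {a}) ↔ ∃ b, t i = {b} := by
  rw [exists_eq_singleton_iff_nonempty_not_exists_lt,
    exists_eq_singleton_iff_nonempty_not_exists_lt, inter_nonempty_iff_of_hintikkaType_eq h,
    exists_lt_iff_of_hintikkaType_eq h]

theorem exists_set_iff_of_hintikkaType_eq {s : Fin l → Set A} {t : Fin l → Set B}
    {p : Set A → Prop} {q : Set B → Prop} (h : hintikkaType (n + 1) s = hintikkaType (n + 1) t)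
    (hpq : ∀ S T, hintikkaType n (Matrix.vecCons S s) = hintikkaType n (Matrix.vecCons T t) →
      (p S ↔ q T)) :
    (∃ S, p S) ↔ ∃ T, q T := by
  obtain ⟨forth, back⟩ := hintikkaType_succ_eq_iff.1 h
  constructor
  · rintro ⟨S, hS⟩
    obtain ⟨T, hST⟩ := forth S
    exact ⟨T, (hpq S T hST).1 hS⟩
  · rintro ⟨T, hT⟩
    obtain ⟨S, hST⟩ := back T
    exact ⟨S, (hpq S T hST).2 hT⟩

theorem exists_elem_iff_of_hintikkaType_eq {s : Fin l → Set A} {t : Fin l → Set B}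
    {p : A → Prop} {q : B → Prop} (h : hintikkaType (n + 1) s = hintikkaType (n + 1) t)
    (hpq : ∀ a b, hintikkaType n (Matrix.vecCons {a} s) = hintikkaType n (Matrix.vecCons {b} t) →
      (p a ↔ q b)) :
    (∃ a, p a) ↔ ∃ b, q b := by
  suffices (∃ S : Set A, ∃ a, S = {a} ∧ p a) ↔ ∃ T : Set B, ∃ b, T = {b} ∧ q b by
    simpa only [exists_comm (α := Set _), exists_eq_left] using this
  refine exists_set_iff_of_hintikkaType_eq h fun S T hST => ?_
  have hsingleton : (∃ a, S = {a}) ↔ ∃ b, T = {b} :=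
    exists_eq_singleton_iff_of_hintikkaType_eq hST 0
  constructor
  · rintro ⟨a, rfl, ha⟩
    obtain ⟨b, rfl⟩ := hsingleton.1 ⟨a, rfl⟩
    exact ⟨b, rfl, (hpq a b hST).1 ha⟩
  · rintro ⟨b, rfl, hb⟩
    obtain ⟨a, rfl⟩ := hsingleton.2 ⟨b, rfl⟩
    exact ⟨a, rfl, (hpq a b hST).2 hb⟩

end HintikkaType

section Formulas

variable {A B : Type*} {m k l N : ℕ}

/-- The named sets `u` contain the predicates `P`, the values of the element variables `e` (as
singletons) and those of the set variables `s`, at the indices given by `π`, `ι` and `κ`. -/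
structure CodesAssignment (π : Fin m → Fin N) (ι : Fin k → Fin N) (κ : Fin l → Fin N)
    (P : Fin m → Set A) (e : Fin k → A) (s : Fin l → Set A) (u : Fin N → Set A) : Prop where
  pred : ∀ p, u (π p) = P p
  elem : ∀ i, u (ι i) = {e i}
  set : ∀ X, u (κ X) = s X

namespace CodesAssignment

variable {π : Fin m → Fin N} {ι : Fin k → Fin N} {κ : Fin l → Fin N}
  {P : Fin m → Set A} {e : Fin k → A} {s : Fin l → Set A} {u : Fin N → Set A}
  {Q : Fin m → Set B} {e' : Fin k → B} {s' : Fin l → Set B} {v : Fin N → Set B}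

theorem of_predicates (P : Fin m → Set A) :
    CodesAssignment id Fin.elim0 Fin.elim0 P (fun i => i.elim0) (fun X => X.elim0) P where
  pred _ := rfl
  elem i := i.elim0
  set X := X.elim0

theorem consElem (h : CodesAssignment π ι κ P e s u) (a : A) :
    CodesAssignment (fun p => (π p).succ) (Fin.cons 0 fun i => (ι i).succ) (fun X => (κ X).succ)
      P (Fin.cons a e) s (Matrix.vecCons {a} u) where
  pred := h.pred
  elem := Fin.cases rfl h.elem
  set := h.set

theorem consSet (h : CodesAssignment π ι κ P e s u) (S : Set A) :
    CodesAssignment (fun p => (π p).succ) (fun i => (ι i).succ) (Fin.cons 0 fun X => (κ X).succ)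
      P e (Fin.cons S s) (Matrix.vecCons S u) where
  pred := h.pred
  elem := h.elem
  set := Fin.cases rfl h.set

theorem sat_iff [LinearOrder A] [LinearOrder B] {φ : MSO m k l} {n : ℕ}
    (hu : CodesAssignment π ι κ P e s u) (hv : CodesAssignment π ι κ Q e' s' v)
    (hn : φ.depth ≤ n) (h : hintikkaType n u = hintikkaType n v) :
    φ.Sat P e s ↔ φ.Sat Q e' s' := by
  induction φ generalizing n N with
  | lt i j =>
    simpa [MSO.Sat, hu.elem, hv.elem] using exists_lt_iff_of_hintikkaType_eq h (ι i) (ι j)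
  | eq i j =>
    simpa [MSO.Sat, hu.elem, hv.elem] using inter_nonempty_iff_of_hintikkaType_eq h (ι j) (ι i)
  | mem i X =>
    simpa [MSO.Sat, hu.elem, hv.elem, hu.set, hv.set]
      using inter_nonempty_iff_of_hintikkaType_eq h (ι i) (κ X)
  | pred p i =>
    simpa [MSO.Sat, hu.elem, hv.elem, hu.pred, hv.pred]
      using inter_nonempty_iff_of_hintikkaType_eq h (ι i) (π p)
  | not φ ih => exact not_congr (ih hu hv hn h)
  | and φ ψ ihφ ihψ =>
    obtain ⟨hφ, hψ⟩ := max_le_iff.1 hn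
    exact and_congr (ihφ hu hv hφ h) (ihψ hu hv hψ h)
  | exElem φ ih =>
    obtain ⟨n, rfl⟩ := Nat.exists_eq_add_of_le' ((Nat.le_add_left 1 φ.depth).trans hn)
    exact exists_elem_iff_of_hintikkaType_eq h fun a b hab =>
      ih (hu.consElem a) (hv.consElem b) (Nat.le_of_succ_le_succ hn) hab
  | exSet φ ih =>
    obtain ⟨n, rfl⟩ := Nat.exists_eq_add_of_le' ((Nat.le_add_left 1 φ.depth).trans hn)
    exact exists_set_iff_of_hintikkaType_eq h fun S T hST =>
      ih (hu.consSet S) (hv.consSet T) (Nat.le_of_succ_le_succ hn) hST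

end CodesAssignment

theorem satS_iff_of_hintikkaType_eq [LinearOrder A] [LinearOrder B] {P : Fin m → Set A}
    {Q : Fin m → Set B} {φ : MSO m 0 0} (h : hintikkaType φ.depth P = hintikkaType φ.depth Q) :
    φ.SatS P ↔ φ.SatS Q :=
  (CodesAssignment.of_predicates P).sat_iff (CodesAssignment.of_predicates Q) le_rfl h

end Formulas

section Composition

variable {I : Type*} {C D : I → Type*}

/-- The trace on the `i`-th summand of a subset of an ordered sum. -/
def lexFiber (S : Set (Σₗ i, C i)) (i : I) : Set (C i) :=
  {x | toLex ⟨i, x⟩ ∈ S}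

/-- The subset of an ordered sum with prescribed traces on the summands. -/
def lexGlue (T : ∀ i, Set (C i)) : Set (Σₗ i, C i) :=
  {a | (ofLex a).2 ∈ T (ofLex a).1}

theorem lexFiber_lexGlue (T : ∀ i, Set (C i)) (i : I) : lexFiber (lexGlue T) i = T i :=
  rfl

theorem lexFiber_vecCons {l : ℕ} (S : Set (Σₗ i, C i)) (s : Fin l → Set (Σₗ i, C i)) (i : I) :
    (fun j => lexFiber (Matrix.vecCons S s j) i) =
      Matrix.vecCons (lexFiber S i) fun j => lexFiber (s j) i :=
  funext (Fin.cases rfl fun _ => rfl)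

theorem inter_nonempty_iff_lexFiber (S T : Set (Σₗ i, C i)) :
    (S ∩ T).Nonempty ↔ ∃ i, (lexFiber S i ∩ lexFiber T i).Nonempty :=
  ⟨fun ⟨a, ha⟩ => ⟨(ofLex a).1, (ofLex a).2, ha⟩, fun ⟨i, x, hx⟩ => ⟨toLex ⟨i, x⟩, hx⟩⟩

variable [LinearOrder I] [∀ i, LinearOrder (C i)] [∀ i, LinearOrder (D i)]

theorem exists_lt_iff_lexFiber (S T : Set (Σₗ i, C i)) :
    (∃ a ∈ S, ∃ b ∈ T, a < b) ↔
      (∃ i j, i < j ∧ (lexFiber S i ∩ lexFiber S i).Nonempty ∧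
        (lexFiber T j ∩ lexFiber T j).Nonempty) ∨
      ∃ i, ∃ x ∈ lexFiber S i, ∃ y ∈ lexFiber T i, x < y := by
  simp only [Set.inter_self]
  constructor
  · rintro ⟨⟨i, x⟩, hx, ⟨j, y⟩, hy, hxy⟩
    rcases hxy with ⟨_, _, hij⟩ | ⟨_, y, hxy⟩
    · exact Or.inl ⟨i, j, hij, ⟨x, hx⟩, ⟨y, hy⟩⟩
    · exact Or.inr ⟨i, x, hx, y, hy, hxy⟩
  · rintro (⟨i, j, hij, ⟨x, hx⟩, ⟨y, hy⟩⟩ | ⟨i, x, hx, y, hy, hxy⟩)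
    · exact ⟨toLex ⟨i, x⟩, hx, toLex ⟨j, y⟩, hy, .left _ _ hij⟩
    · exact ⟨toLex ⟨i, x⟩, hx, toLex ⟨i, y⟩, hy, .right _ _ hxy⟩

theorem hintikkaType_sigmaLex_congr {n l : ℕ} {s : Fin l → Set (Σₗ i, C i)}
    {t : Fin l → Set (Σₗ i, D i)}
    (h : ∀ i, hintikkaType n (fun j => lexFiber (s j) i) =
      hintikkaType n fun j => lexFiber (t j) i) :
    hintikkaType n s = hintikkaType n t := by
  induction n generalizing l with
  | zero =>
    refine hintikkaType_zero_eq_iff.2 ⟨fun j j' => ?_, fun j j' => ?_⟩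
    · simp only [inter_nonempty_iff_lexFiber, inter_nonempty_iff_of_hintikkaType_eq (h _) j j']
    · simp only [exists_lt_iff_lexFiber, inter_nonempty_iff_of_hintikkaType_eq (h _) j j,
        inter_nonempty_iff_of_hintikkaType_eq (h _) j' j',
        exists_lt_iff_of_hintikkaType_eq (h _) j j']
  | succ n ih =>
    have hfiber := fun i => hintikkaType_succ_eq_iff.1 (h i)
    refine hintikkaType_succ_eq_iff.2 ⟨fun S => ?_, fun T => ?_⟩
    · choose T hT using fun i => (hfiber i).1 (lexFiber S i)
      exact ⟨lexGlue T, ih fun i => by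
        simpa only [lexFiber_vecCons, lexFiber_lexGlue] using hT i⟩
    · choose S hS using fun i => (hfiber i).2 (lexFiber T i)
      exact ⟨lexGlue S, ih fun i => by
        simpa only [lexFiber_vecCons, lexFiber_lexGlue] using hS i⟩

theorem hintikkaType_preimage_orderIso {A B : Type*} [LinearOrder A] [LinearOrder B] {n l : ℕ}
    (f : A ≃o B) (t : Fin l → Set B) :
    hintikkaType n (fun j => f ⁻¹' t j) = hintikkaType n t := by
  induction n generalizing l with
  | zero =>
    refine hintikkaType_zero_eq_iff.2 ⟨fun j j' => ?_, fun j j' => ?_⟩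
    · rw [← Set.preimage_inter, f.surjective.nonempty_preimage]
    · simp only [Set.mem_preimage, f.surjective.exists, f.lt_iff_lt]
  | succ n ih =>
    have hcons (T : Set B) : hintikkaType n (Matrix.vecCons (f ⁻¹' T) fun j => f ⁻¹' t j) =
        hintikkaType n (Matrix.vecCons T t) := by
      rw [← ih]
      exact congrArg _ (funext (Fin.cases rfl fun _ => rfl))
    refine hintikkaType_succ_eq_iff.2 ⟨fun S => ⟨f '' S, ?_⟩, fun T => ⟨f ⁻¹' T, hcons T⟩⟩
    rw [← hcons, f.injective.preimage_image]

end Composition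

section OrderType

variable {A B : Type*} [LinearOrder A] [LinearOrder B] {n : ℕ}

/-- The depth-`n` monadic theory of a pure linear order: its Hintikka type with no named subsets. -/
def msoType (n : ℕ) (A : Type*) [LinearOrder A] : HintikkaType n 0 :=
  hintikkaType n (![] : Fin 0 → Set A)

theorem hintikkaType_eq_msoType (s : Fin 0 → Set A) : hintikkaType n s = msoType n A :=
  congrArg (hintikkaType n) (Subsingleton.elim s ![])

theorem msoType_congr (f : A ≃o B) : msoType n A = msoType n B := by
  simpa only [hintikkaType_eq_msoType] using hintikkaType_preimage_orderIso (n := n) f ![]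

theorem msoType_sigmaLex_congr {I : Type*} [LinearOrder I] {C D : I → Type*}
    [∀ i, LinearOrder (C i)] [∀ i, LinearOrder (D i)]
    (h : ∀ i, msoType n (C i) = msoType n (D i)) :
    msoType n (Σₗ i, C i) = msoType n (Σₗ i, D i) :=
  hintikkaType_sigmaLex_congr fun i => by simpa only [hintikkaType_eq_msoType] using h i

end OrderType

theorem ordMSOEquiv_of_msoType_eq {a b : Ordinal}
    (h : ∀ n, msoType n (Set.Iio a) = msoType n (Set.Iio b)) : OrdMSOEquiv a b := fun φ =>
  satS_iff_of_hintikkaType_eq (by simpa only [hintikkaType_eq_msoType] using h φ.depth)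

section OmegaSum

open Ordinal

universe u

/-- The ordinal sum `c 0 + c 1 + ⋯ + c (k - 1)`. -/
def partialSum (c : ℕ → Ordinal.{u}) (k : ℕ) : Ordinal.{u} :=
  ((List.range k).map c).sum

/-- The ordinal sum `c 0 + c 1 + c 2 + ⋯` of order type `ω`. -/
noncomputable def omegaSum (c : ℕ → Ordinal.{u}) : Ordinal.{u} :=
  ⨆ k, partialSum c k

variable {c d : ℕ → Ordinal.{u}} {a b : Ordinal.{u}} {n : ℕ}

theorem partialSum_succ (c : ℕ → Ordinal.{u}) (k : ℕ) :
    partialSum c (k + 1) = partialSum c k + c k :=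
  List.sum_range_succ c k

theorem partialSum_monotone (c : ℕ → Ordinal.{u}) : Monotone (partialSum c) :=
  monotone_nat_of_le_succ fun k => by
    rw [partialSum_succ]
    exact le_self_add

theorem partialSum_le_omegaSum (c : ℕ → Ordinal.{u}) (k : ℕ) : partialSum c k ≤ omegaSum c :=
  Ordinal.le_iSup (partialSum c) k

theorem partialSum_add_lt_of_lt {j k : ℕ} (hjk : j < k) {x : Ordinal.{u}} (hx : x < c j) :
    partialSum c j + x < partialSum c k :=
  calc
    partialSum c j + x < partialSum c j + c j := by gcongr
    _ = partialSum c (j + 1) := (partialSum_succ c j).symm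
    _ ≤ partialSum c k := partialSum_monotone c hjk

theorem exists_eq_partialSum_add_of_lt_omegaSum {x : Ordinal.{u}} (hx : x < omegaSum c) :
    ∃ k, ∃ y < c k, x = partialSum c k + y := by
  obtain ⟨K, hK⟩ : ∃ K, x < partialSum c K := Ordinal.lt_iSup_iff.1 hx
  induction K with
  | zero => exact absurd hK not_lt_bot
  | succ k ih =>
    obtain hlt | hle := lt_or_ge x (partialSum c k)
    · exact ih hlt
    · refine ⟨k, x - partialSum c k, ?_, (Ordinal.add_sub_cancel_of_le hle).symm⟩
      rwa [Ordinal.sub_lt_of_le hle, ← partialSum_succ]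

/-- `omegaSum c` is the order type of the lexicographic sum of the `c k`: the summand `Iio (c k)`
is embedded by `x ↦ c 0 + ⋯ + c (k - 1) + x`. -/
noncomputable def sigmaLexIioOrderIso (c : ℕ → Ordinal.{u}) :
    (Σₗ k, Set.Iio (c k)) ≃o Set.Iio (omegaSum c) :=
  StrictMono.orderIsoOfSurjective
    (fun p => ⟨partialSum c (ofLex p).1 + (ofLex p).2.1,
      (partialSum_add_lt_of_lt (Nat.lt_succ_self _) (ofLex p).2.2).trans_le
        (partialSum_le_omegaSum c _)⟩)
    (by
      rintro ⟨j, x⟩ ⟨k, y⟩ (⟨_, _, hjk⟩ | ⟨_, y, hxy⟩)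
      · exact (partialSum_add_lt_of_lt hjk x.2).trans_le le_self_add
      · exact add_lt_add_right (α := Ordinal) hxy _)
    (by
      rintro ⟨x, hx⟩
      obtain ⟨k, y, hy, rfl⟩ := exists_eq_partialSum_add_of_lt_omegaSum hx
      exact ⟨toLex ⟨k, y, hy⟩, rfl⟩)

theorem msoType_omegaSum_congr
    (h : ∀ k, msoType n (Set.Iio (c k)) = msoType n (Set.Iio (d k))) :
    msoType n (Set.Iio (omegaSum c)) = msoType n (Set.Iio (omegaSum d)) := by
  rw [← msoType_congr (sigmaLexIioOrderIso c), ← msoType_congr (sigmaLexIioOrderIso d)]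
  exact msoType_sigmaLex_congr h

theorem omegaSum_eq_iSup {f : ℕ → Ordinal.{u}} (h₀ : c 0 = f 0)
    (hsucc : ∀ k, f k + c (k + 1) = f (k + 1)) : omegaSum c = ⨆ k, f k := by
  have hpartial (k : ℕ) : partialSum c (k + 1) = f k := by
    induction k with
    | zero => simp [partialSum, h₀]
    | succ k ih => rw [partialSum_succ, ih, hsucc]
  refine le_antisymm (ciSup_le' fun k => ?_) (ciSup_le' fun k => ?_)
  · exact (partialSum_monotone c k.le_succ).trans
      ((hpartial k).trans_le (Ordinal.le_iSup f k))
  · exact (hpartial k).symm.trans_le (partialSum_le_omegaSum c _)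

theorem omegaSum_const (a : Ordinal.{u}) : omegaSum (fun _ => a) = a * ω := by
  have hpartial (k : ℕ) : partialSum (fun _ => a) k = a * k := by
    simp [partialSum, Ordinal.nsmul_eq_mul]
  simp only [omegaSum, hpartial, Ordinal.iSup_mul_natCast]

theorem omegaSum_pair (a b : Ordinal.{u}) :
    omegaSum (fun | 0 => a | 1 => b | _ + 2 => 0) = a + b := by
  let f : ℕ → Ordinal.{u} := fun | 0 => a | _ + 1 => a + b
  have hf : omegaSum (fun | 0 => a | 1 => b | _ + 2 => 0) = ⨆ k, f k :=
    omegaSum_eq_iSup rfl fun | 0 => rfl | _ + 1 => add_zero _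
  rw [hf]
  refine le_antisymm (ciSup_le' fun k => ?_) (Ordinal.le_iSup f 1)
  cases k with
  | zero => exact le_self_add
  | succ k => exact le_rfl

theorem mul_omegaSum (b : Ordinal.{u}) (c : ℕ → Ordinal.{u}) :
    b * omegaSum c = omegaSum fun k => b * c k := by
  have hpartial (k : ℕ) : partialSum (fun k => b * c k) k = b * partialSum c k := by
    induction k with
    | zero => exact (mul_zero b).symm
    | succ k ih => rw [partialSum_succ, partialSum_succ, ih, mul_add]
  simp only [omegaSum, hpartial, Ordinal.mul_iSup]

theorem msoType_mul_omega0_congr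
    (h : msoType n (Set.Iio a) = msoType n (Set.Iio b)) :
    msoType n (Set.Iio (a * ω)) = msoType n (Set.Iio (b * ω)) := by
  rw [← omegaSum_const, ← omegaSum_const]
  exact msoType_omegaSum_congr fun _ => h

theorem msoType_add_congr {a' b' : Ordinal.{u}}
    (ha : msoType n (Set.Iio a) = msoType n (Set.Iio a'))
    (hb : msoType n (Set.Iio b) = msoType n (Set.Iio b')) :
    msoType n (Set.Iio (a + b)) = msoType n (Set.Iio (a' + b')) := by
  rw [← omegaSum_pair, ← omegaSum_pair]
  refine msoType_omegaSum_congr ?_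
  rintro (_ | _ | k)
  · exact ha
  · exact hb
  · exact rfl

theorem exists_strictMono_iSup_eq_of_cof_eq_aleph0 (ha : a.cof = Cardinal.aleph0) :
    ∃ g : ℕ → Ordinal.{u}, StrictMono g ∧ (∀ k, g k < a) ∧ ⨆ k, g k = a := by
  obtain ⟨f, hf⟩ := Ordinal.exists_isFundamentalSeq (o := a) (a := ω)
    (by rw [ha, Cardinal.ord_aleph0])
  refine ⟨fun k => f ⟨k, Ordinal.natCast_lt_omega0 k⟩,
    fun j k hjk => hf.strictMono (Subtype.mk_lt_mk.2 (Nat.cast_lt.2 hjk)), fun k => (f _).2,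
    le_antisymm (ciSup_le' fun k => (f _).2.le) ?_⟩
  refine (hf.iSup_eq Ordinal.one_lt_omega0).symm.trans_le (ciSup_le' fun ⟨i, hi⟩ => ?_)
  obtain ⟨k, rfl⟩ := Ordinal.lt_omega0.1 hi
  exact Ordinal.le_iSup (fun k : ℕ => (f ⟨k, Ordinal.natCast_lt_omega0 k⟩).1) k

theorem exists_omegaSum_eq_of_cof_eq_aleph0 (ha : a.cof = Cardinal.aleph0) :
    ∃ c : ℕ → Ordinal.{u}, (∀ k, c k ≠ 0) ∧ (∀ k, c k < a) ∧ omegaSum c = a := by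
  obtain ⟨g, hg, hlt, hsup⟩ := exists_strictMono_iSup_eq_of_cof_eq_aleph0 ha
  refine ⟨fun | 0 => g 1 | k + 1 => g (k + 2) - g (k + 1), ?_, ?_, ?_⟩
  · rintro (_ | k)
    · exact (bot_le.trans_lt (hg zero_lt_one)).ne'
    · exact (Ordinal.lt_sub.2 (by simpa using hg (k + 1).lt_succ_self)).ne'
  · rintro (_ | k)
    · exact hlt 1
    · exact (Ordinal.sub_le_self _ _).trans_lt (hlt _)
  · rw [omegaSum_eq_iSup (f := fun k => g (k + 1)) rfl fun k =>
      Ordinal.add_sub_cancel_of_le (hg (k + 1).lt_succ_self).le]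
    refine le_antisymm (ciSup_le' fun k => (hlt _).le) (hsup.symm.trans_le (ciSup_le' fun k => ?_))
    exact (hg k.lt_succ_self).le.trans (Ordinal.le_iSup (fun k => g (k + 1)) k)

end OmegaSum

section Multiples

open Ordinal

universe u

variable {a b : Ordinal.{u}} {n : ℕ}

theorem msoType_mul_eq_self (hb : msoType n (Set.Iio (b * ω)) = msoType n (Set.Iio b))
    (ha₀ : a ≠ 0) (ha : a < ω₁) : msoType n (Set.Iio (b * a)) = msoType n (Set.Iio b) := by
  have hdouble : msoType n (Set.Iio (b + b)) = msoType n (Set.Iio b) :=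
    calc
      _ = msoType n (Set.Iio (b + b * ω)) := msoType_add_congr rfl hb.symm
      _ = msoType n (Set.Iio (b * ω)) := by rw [← mul_one_add, one_add_omega0]
      _ = _ := hb
  induction a using Ordinal.limitRecOn with
  | zero => exact absurd rfl ha₀
  | add_one a ih =>
    rw [mul_add_one]
    obtain rfl | h₀ := eq_or_ne a 0
    · rw [mul_zero, zero_add]
    · exact (msoType_add_congr (ih h₀ ((lt_add_one a).trans ha)) rfl).trans hdouble
  | limit a hlim ih =>
    obtain ⟨c, hc₀, hlt, rfl⟩ :=
      exists_omegaSum_eq_of_cof_eq_aleph0 (cof_eq_aleph0_of_isSuccLimit hlim ha)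
    rw [mul_omegaSum, ← hb, ← omegaSum_const]
    exact msoType_omegaSum_congr fun k => ih (c k) (hlt k) (hc₀ k) ((hlt k).trans ha)

theorem msoType_opow_mul_omega0_eq {i j : Ordinal.{u}} (hij : i + 1 < j)
    (h : msoType n (Set.Iio (ω ^ i)) = msoType n (Set.Iio (ω ^ j))) :
    msoType n (Set.Iio (ω ^ (i + 1) * ω)) = msoType n (Set.Iio (ω ^ (i + 1))) := by
  have habsorb : ω ^ i + ω ^ (i + 1) = ω ^ (i + 1) :=
    add_omega0_opow ((opow_lt_opow_iff_right one_lt_omega0).2 (lt_add_one i))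
  have hsum : msoType n (Set.Iio (ω ^ (i + 1) + ω ^ i)) = msoType n (Set.Iio (ω ^ i)) :=
    calc
      _ = msoType n (Set.Iio (ω ^ (i + 1) + ω ^ j)) := msoType_add_congr rfl h
      _ = msoType n (Set.Iio (ω ^ j)) := by
        rw [add_omega0_opow ((opow_lt_opow_iff_right one_lt_omega0).2 hij)]
      _ = _ := h.symm
  calc
    _ = msoType n (Set.Iio ((ω ^ (i + 1) + ω ^ i) * ω)) := by
      rw [add_mul_of_isSuccLimit habsorb isSuccLimit_omega0]
    _ = msoType n (Set.Iio (ω ^ i * ω)) := msoType_mul_omega0_congr hsum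
    _ = _ := by rw [opow_add_one]

theorem exists_msoType_opow_natCast_mul_omega0_eq (n : ℕ) :
    ∃ m : ℕ, msoType n (Set.Iio ((ω : Ordinal.{u}) ^ (m : Ordinal.{u}) * ω)) =
      msoType n (Set.Iio ((ω : Ordinal.{u}) ^ (m : Ordinal.{u}))) := by
  obtain ⟨p, q, hpq, heq⟩ := Set.finite_univ.exists_lt_map_eq_of_forall_mem
    (f := fun k : ℕ => msoType n (Set.Iio ((ω : Ordinal.{u}) ^ ((2 * k : ℕ) : Ordinal.{u}))))
    fun _ => Set.mem_univ _
  refine ⟨2 * p + 1, ?_⟩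
  rw [Nat.cast_add_one]
  exact msoType_opow_mul_omega0_eq (by exact_mod_cast (by omega : 2 * p + 1 < 2 * q)) heq

theorem omega0_opow_omega0_lt_omega_one : (ω : Ordinal.{u}) ^ (ω : Ordinal.{u}) < ω₁ :=
  isPrincipal_opow_omega 1 omega0_lt_omega_one omega0_lt_omega_one

theorem msoType_omega0_opow_omega0_mul (ha₀ : a ≠ 0) (ha : a < ω₁) :
    msoType n (Set.Iio (ω ^ ω * a)) =
      msoType n (Set.Iio ((ω : Ordinal.{u}) ^ (ω : Ordinal.{u}))) := by
  obtain ⟨m, hm⟩ := exists_msoType_opow_natCast_mul_omega0_eq.{u} n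
  have habsorb : (ω : Ordinal.{u}) ^ (m : Ordinal.{u}) * ω ^ ω = ω ^ ω := by
    rw [← opow_add, natCast_add_omega0]
  have hpow : (ω : Ordinal.{u}) ^ (ω : Ordinal.{u}) ≠ 0 := (opow_pos _ omega0_pos).ne'
  calc
    _ = msoType n (Set.Iio (ω ^ (m : Ordinal) * (ω ^ ω * a))) := by rw [← mul_assoc, habsorb]
    _ = msoType n (Set.Iio (ω ^ (m : Ordinal))) :=
      msoType_mul_eq_self hm (mul_ne_zero hpow ha₀)
        (isPrincipal_mul_omega 1 omega0_opow_omega0_lt_omega_one ha)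
    _ = msoType n (Set.Iio (ω ^ (m : Ordinal) * ω ^ ω)) :=
      (msoType_mul_eq_self hm hpow omega0_opow_omega0_lt_omega_one).symm
    _ = _ := by rw [habsorb]

end Multiples

section Universes

open Ordinal

universe u v

theorem msoType_Iio_lift (n : ℕ) (a : Ordinal.{u}) :
    msoType n (Set.Iio (Ordinal.lift.{v} a)) = msoType n (Set.Iio a) := by
  let f : Set.Iio a → Set.Iio (Ordinal.lift.{v} a) :=
    fun x => ⟨Ordinal.lift.{v} x.1, Ordinal.lift_lt.2 x.2⟩
  have hf : StrictMono f := fun x y hxy => Ordinal.lift_lt.2 hxy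
  refine (msoType_congr (hf.orderIsoOfSurjective f ?_)).symm
  rintro ⟨y, hy⟩
  obtain ⟨x, hx, rfl⟩ := Ordinal.lt_lift_iff.1 hy
  exact ⟨⟨x, hx⟩, rfl⟩

theorem ordinal_lift_pow (a : Ordinal.{u}) (k : ℕ) :
    Ordinal.lift.{v} (a ^ k) = Ordinal.lift.{v} a ^ k := by
  induction k with
  | zero => rw [pow_zero, pow_zero, lift_one]
  | succ k ih => rw [pow_succ, pow_succ, lift_mul, ih]

theorem ordinal_lift_opow_omega0 {a : Ordinal.{u}} (ha : 0 < a) :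
    Ordinal.lift.{v} (a ^ (ω : Ordinal.{u})) = Ordinal.lift.{v} a ^ (ω : Ordinal.{max u v}) := by
  rw [← iSup_pow_natCast ha, ← iSup_pow_natCast (lift_zero.symm.trans_lt (lift_lt.2 ha)),
    ← liftInitialSeg_coe, liftInitialSeg.isNormal.map_iSup (Ordinal.bddAbove_of_small)]
  simp only [liftInitialSeg_coe, ordinal_lift_pow]

theorem exists_ordMSOEquiv_of_lt_omega0_opow_omega0_add {a : Ordinal.{u}}
    (ha : a < ω ^ (ω : Ordinal.{u}) + ω ^ (ω : Ordinal.{u})) :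
    ∃ b : Ordinal.{v}, b < ω ^ (ω : Ordinal.{v}) + ω ^ (ω : Ordinal.{v}) ∧ OrdMSOEquiv a b := by
  have hlift : Ordinal.lift.{v} a <
      Ordinal.lift.{u} (ω ^ (ω : Ordinal.{v}) + ω ^ (ω : Ordinal.{v})) := by
    have := Ordinal.lift_lt.{v, u}.2 ha
    simpa only [lift_add, ordinal_lift_opow_omega0 omega0_pos, lift_omega0] using this
  obtain ⟨b, hb, hba⟩ := lt_lift_iff.1 hlift
  refine ⟨b, hb, ordMSOEquiv_of_msoType_eq fun n => ?_⟩
  rw [← msoType_Iio_lift.{u, v} n a, ← hba, msoType_Iio_lift]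

end Universes

section SmallRepresentatives

open Ordinal

universe u v

theorem ordMSOEquiv_omega0_opow_omega0_mul_add {a b : Ordinal.{u}} (ha₀ : a ≠ 0) (ha : a < ω₁) :
    OrdMSOEquiv (ω ^ ω * a + b) (ω ^ ω + b) :=
  ordMSOEquiv_of_msoType_eq fun _ => msoType_add_congr (msoType_omega0_opow_omega0_mul ha₀ ha) rfl

theorem exists_ordMSOEquiv_of_lt_omega_one {a : Ordinal.{u}} (ha : a < ω₁) :
    ∃ b : Ordinal.{v}, b < ω ^ (ω : Ordinal.{v}) + ω ^ (ω : Ordinal.{v}) ∧ OrdMSOEquiv a b := by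
  have hpow : 0 < (ω : Ordinal.{u}) ^ (ω : Ordinal.{u}) := opow_pos _ omega0_pos
  obtain hlt | hle := lt_or_ge a (ω ^ (ω : Ordinal.{u}))
  · exact exists_ordMSOEquiv_of_lt_omega0_opow_omega0_add (hlt.trans_le le_self_add)
  · have hquot : a / ω ^ ω ≠ 0 := ((Ordinal.div_pos hpow.ne').2 hle).ne'
    have hdiv : a / ω ^ ω < ω₁ := (div_le_of_le_mul (le_mul_right a hpow)).trans_lt ha
    have hequiv : OrdMSOEquiv a (ω ^ ω + a % ω ^ ω) := by
      simpa only [div_add_mod] using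
        ordMSOEquiv_omega0_opow_omega0_mul_add (b := a % ω ^ ω) hquot hdiv
    obtain ⟨b, hb, hequiv'⟩ := exists_ordMSOEquiv_of_lt_omega0_opow_omega0_add.{u, v}
      (add_lt_add_right (mod_lt a hpow.ne') (ω ^ ω))
    exact ⟨b, hb, fun φ => (hequiv φ).trans (hequiv' φ)⟩

theorem countable_ordinal_monadically_equiv_small_general :
    (∀ α : Ordinal.{u}, α < (Cardinal.aleph 1).ord →
      ∃ β : Ordinal.{v}, β < ω ^ (ω : Ordinal.{v}) + ω ^ (ω : Ordinal.{v}) ∧ OrdMSOEquiv α β) ∧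
    ∀ α₁ α₂ : Ordinal.{u}, α₁ < (Cardinal.aleph 1).ord → 1 ≤ α₁ →
      OrdMSOEquiv (ω ^ ω * α₁ + α₂) (ω ^ ω + α₂) := by
  rw [Cardinal.ord_aleph]
  exact ⟨fun α hα => exists_ordMSOEquiv_of_lt_omega_one hα, fun α₁ α₂ hα₁ h =>
    ordMSOEquiv_omega0_opow_omega0_mul_add (Order.one_le_iff_pos.1 h).ne' hα₁⟩

end SmallRepresentatives

/-- (Shelah, Thm 3.5(C) for `λ = ω`.) Every countable ordinal `α` has the same monadic
theory as some `β < ω^ω + ω^ω`; concretely, writing `α = ω^ω·α₁ + α₂` with `α₂ < ω^ω`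
and `α₁ ≥ 1`, the ordinal `ω^ω + α₂` has the same monadic theory as `α`. -/
theorem countable_ordinal_monadically_equiv_small
    (α : Ordinal) (hα : α < (Cardinal.aleph 1).ord) :
    (∃ β : Ordinal,
        β < Ordinal.omega0 ^ Ordinal.omega0 + Ordinal.omega0 ^ Ordinal.omega0 ∧
        OrdMSOEquiv α β) ∧
    (∀ α₁ α₂ : Ordinal,
        α = Ordinal.omega0 ^ Ordinal.omega0 * α₁ + α₂ →
        α₂ < Ordinal.omega0 ^ Ordinal.omega0 → 1 ≤ α₁ →
        OrdMSOEquiv α (Ordinal.omega0 ^ Ordinal.omega0 + α₂)) := by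
  obtain ⟨hsmall, hequiv⟩ := countable_ordinal_monadically_equiv_small_general
  refine ⟨hsmall α hα, ?_⟩
  rintro α₁ α₂ rfl - h₁
  have hle : α₁ ≤ Ordinal.omega0 ^ Ordinal.omega0 * α₁ + α₂ :=
    (Ordinal.le_mul_right α₁ (Ordinal.opow_pos _ Ordinal.omega0_pos)).trans le_self_add
  exact hequiv α₁ α₂ (hle.trans_lt hα) h₁
end

section
/- Let N be a dense linear order such that neither ω₁ nor its reverse ω₁* embeds into N, let I ⊆ N be a dense subset, and suppose there is a fixed value t₀ such that the monadic n-theory Th^n((N,P̄)↾[a,b)) equals t₀ for all a < b in I. Then there is a value t₁ such that for every convex subset J of N with no first and no last element, Th^n((N,P̄)↾J) = t₁; in particular all open intervals (a,b) of N have the same monadic n-theory t₁, namely t₁ = Σ_{n∈ℤ} t₀. -/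
/-- The unary predicates `P` restricted to a subset `S`. -/
def restrictPred {N : Type} {m : ℕ} (P : Fin m → Set N) (S : Set N) : Fin m → Set ↥S :=
  fun i => {x : ↥S | (x : N) ∈ P i}

/-!
A convex set without endpoints has countable cofinality and coinitiality, so it is cut by a
`ℤ`-indexed increasing sequence from `I` into intervals `[cᵢ, cᵢ₊₁)`, all with theory `t₀`. An
Ehrenfeucht–Fraïssé game on an ordered sum is won by playing separately on the summands (a set is
chosen on all summands at once), so the theory of the sum depends only on the theories of the
summands and equals `Σ_{i ∈ ℤ} t₀`. Passing from theories to games rests on there being only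
finitely many formulas of given depth up to logical equivalence.
-/

open Filter Set

universe u v w

namespace MSO

variable {m k l n : ℕ}

section Interpretation

/-- The semantic counterpart of `MSO m k l`: a linear order with `m` unary predicates and values
for `k` element variables and `l` set variables, bundled so that one can quantify over all of
them. -/
structure Interpretation (m k l : ℕ) where
  carrier : Type u
  [linearOrder : LinearOrder carrier]
  pred : Fin m → Set carrier
  elem : Fin k → carrier
  set : Fin l → Set carrier

attribute [instance] Interpretation.linearOrder

namespace Interpretation

/-- The interpretation of sentences given by a linear order with unary predicates. -/
def ofPred {α : Type u} [LinearOrder α] (P : Fin m → Set α) : Interpretation.{u} m 0 0 :=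
  ⟨α, P, fun i => i.elim0, fun i => i.elim0⟩

/-- Satisfaction of a formula in an interpretation of its free variables. -/
def Models (M : Interpretation.{u} m k l) (φ : MSO m k l) : Prop :=
  φ.Sat M.pred M.elem M.set

/-- Expansion by the value of one more element variable, which becomes the variable `0`. -/
def consElem (M : Interpretation.{u} m k l) (a : M.carrier) : Interpretation.{u} m (k + 1) l :=
  ⟨M.carrier, M.pred, Fin.cons a M.elem, M.set⟩

/-- Expansion by the value of one more set variable, which becomes the variable `0`. -/
def consSet (M : Interpretation.{u} m k l) (A : Set M.carrier) : Interpretation.{u} m k (l + 1) :=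
  ⟨M.carrier, M.pred, M.elem, Fin.cons A M.set⟩

/-- Equality of the monadic theories `Th^n` of two interpretations. -/
def SameTheory (n : ℕ) (M : Interpretation.{u} m k l) (M' : Interpretation.{v} m k l) : Prop :=
  ∀ φ : MSO m k l, φ.depth ≤ n → (M.Models φ ↔ M'.Models φ)

theorem SameTheory.symm {M : Interpretation.{u} m k l} {M' : Interpretation.{v} m k l}
    (h : M.SameTheory n M') : M'.SameTheory n M :=
  fun φ hφ => (h φ hφ).symm

end Interpretation

end Interpretation

section Representatives

/-- Logical equivalence of formulas, tested on linear orders in a fixed universe. -/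
def Equivalent (φ ψ : MSO m k l) : Prop :=
  ∀ M : Interpretation.{u} m k l, M.Models φ ↔ M.Models ψ

/-- The quantifier-free formulas from which all others are built. -/
def atoms (m k l : ℕ) : Set (MSO m k l) :=
  range (fun x : Fin k × Fin k => lt x.1 x.2) ∪ range (fun x : Fin k × Fin k => eq x.1 x.2) ∪
    range (fun x : Fin k × Fin l => mem x.1 x.2) ∪ range (fun x : Fin m × Fin k => pred x.1 x.2)

theorem finite_atoms : (atoms m k l).Finite :=
  (((finite_range _).union (finite_range _)).union (finite_range _)).union (finite_range _)

theorem sameTheory_of_atoms_of_exists {M : Interpretation.{u} m k l}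
    {M' : Interpretation.{v} m k l} (hatom : ∀ φ ∈ atoms m k l, (M.Models φ ↔ M'.Models φ))
    (helem : ∀ φ : MSO m (k + 1) l, φ.depth < n → (M.Models (exElem φ) ↔ M'.Models (exElem φ)))
    (hset : ∀ φ : MSO m k (l + 1), φ.depth < n → (M.Models (exSet φ) ↔ M'.Models (exSet φ))) :
    M.SameTheory n M' := by
  intro φ
  induction φ with
  | lt i j => exact fun _ => hatom _ (.inl (.inl (.inl ⟨(i, j), rfl⟩)))
  | eq i j => exact fun _ => hatom _ (.inl (.inl (.inr ⟨(i, j), rfl⟩)))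
  | mem i X => exact fun _ => hatom _ (.inl (.inr ⟨(i, X), rfl⟩))
  | pred p i => exact fun _ => hatom _ (.inr ⟨(p, i), rfl⟩)
  | not φ ih => exact fun hφ => not_congr (ih hatom helem hset hφ)
  | and φ ψ ihφ ihψ =>
    exact fun h => and_congr (ihφ hatom helem hset (le_of_max_le_left h))
      (ihψ hatom helem hset (le_of_max_le_right h))
  | exElem φ => exact fun hφ => helem φ hφ
  | exSet φ => exact fun hφ => hset φ hφ

theorem exists_finite_representatives_of_determined {B Γ : Set (MSO m k l)} (hB : B.Finite)
    (hΓ : ∀ φ ∈ Γ, ∀ M M' : Interpretation.{u} m k l,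
      (∀ χ ∈ B, (M.Models χ ↔ M'.Models χ)) → (M.Models φ ↔ M'.Models φ)) :
    ∃ Φ ⊆ Γ, Φ.Finite ∧ ∀ φ ∈ Γ, ∃ ψ ∈ Φ, Equivalent.{u} φ ψ := by
  -- A formula of `Γ` is determined, up to equivalence, by the traces on `B` of its models.
  let traces (φ : MSO m k l) : Set (Set (MSO m k l)) :=
    {T | ∃ M : Interpretation.{u} m k l, M.Models φ ∧ {χ ∈ B | M.Models χ} = T}
  have models_of_traces_eq : ∀ {φ ψ}, ψ ∈ Γ → traces φ = traces ψ →
      ∀ M : Interpretation.{u} m k l, M.Models φ → M.Models ψ := by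
    intro φ ψ hψ h M hM
    obtain ⟨M', hM', htrace⟩ : {χ ∈ B | M.Models χ} ∈ traces ψ := h ▸ ⟨M, hM, rfl⟩
    refine (hΓ ψ hψ M' M fun χ hχ => ?_).1 hM'
    simpa [hχ] using Set.ext_iff.1 htrace χ
  obtain ⟨Φ, hΦΓ, hbij⟩ := exists_subset_bijOn Γ traces
  have hfinite : (traces '' Γ).Finite := by
    refine hB.powerset.powerset.subset ?_
    rintro _ ⟨φ, -, rfl⟩ _ ⟨M, -, rfl⟩
    exact sep_subset _ _
  refine ⟨Φ, hΦΓ, hbij.finite_iff_finite.2 hfinite, fun φ hφ => ?_⟩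
  obtain ⟨ψ, hψ, htraces⟩ := hbij.surjOn (mem_image_of_mem traces hφ)
  exact ⟨ψ, hψ, fun M => ⟨models_of_traces_eq (hΦΓ hψ) htraces.symm M,
    models_of_traces_eq hφ htraces M⟩⟩

theorem Equivalent.exElem {φ ψ : MSO m (k + 1) l} (h : Equivalent.{u} φ ψ) :
    Equivalent.{u} φ.exElem ψ.exElem :=
  fun M => exists_congr fun a => h (M.consElem a)

theorem Equivalent.exSet {φ ψ : MSO m k (l + 1)} (h : Equivalent.{u} φ ψ) :
    Equivalent.{u} φ.exSet ψ.exSet :=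
  fun M => exists_congr fun A => h (M.consSet A)

theorem exists_finite_representatives (n : ℕ) : ∀ k l : ℕ,
    ∃ Φ ⊆ {φ : MSO m k l | φ.depth ≤ n}, Φ.Finite ∧
      ∀ φ ∈ {φ : MSO m k l | φ.depth ≤ n}, ∃ ψ ∈ Φ, Equivalent.{u} φ ψ := by
  induction n with
  | zero =>
    refine fun k l => exists_finite_representatives_of_determined finite_atoms ?_
    exact fun φ hφ M M' h => sameTheory_of_atoms_of_exists h (by simp) (by simp) φ hφ
  | succ n ih =>
    intro k l
    obtain ⟨Φ, -, hΦ, hΦrep⟩ := ih (k + 1) l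
    obtain ⟨Ψ, -, hΨ, hΨrep⟩ := ih k (l + 1)
    refine exists_finite_representatives_of_determined
      ((finite_atoms.union (hΦ.image exElem)).union (hΨ.image exSet)) fun φ hφ M M' h => ?_
    refine sameTheory_of_atoms_of_exists (fun χ hχ => h χ (.inl (.inl hχ)))
      (fun χ hχ => ?_) (fun χ hχ => ?_) φ hφ
    · obtain ⟨ψ, hψ, hχψ⟩ := hΦrep χ (Nat.le_of_lt_succ hχ)
      rw [hχψ.exElem M, hχψ.exElem M']
      exact h _ (.inl (.inr ⟨ψ, hψ, rfl⟩))
    · obtain ⟨ψ, hψ, hχψ⟩ := hΨrep χ (Nat.le_of_lt_succ hχ)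
      rw [hχψ.exSet M, hχψ.exSet M']
      exact h _ (.inr ⟨ψ, hψ, rfl⟩)

end Representatives

namespace Interpretation

section Extension

variable {ι : Type v} {κ : Type w} {X : ι → Interpretation.{u} m k l}
  {Y : κ → Interpretation.{u} m k l}

theorem exists_models_and_agree_of_finite
    (h : ∀ ψ : MSO m k l, ψ.depth ≤ n → (∃ i, (X i).Models ψ) → ∃ j, (Y j).Models ψ)
    {Φ : Set (MSO m k l)} (hΦ : Φ.Finite) (hdepth : Φ ⊆ {φ | φ.depth ≤ n}) {i : ι} :
    ∀ ψ : MSO m k l, ψ.depth ≤ n → (X i).Models ψ →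
      ∃ j, (Y j).Models ψ ∧ ∀ φ ∈ Φ, ((X i).Models φ ↔ (Y j).Models φ) := by
  induction Φ, hΦ using Set.Finite.induction_on with
  | empty => simpa using fun ψ hψ hi => h ψ hψ ⟨i, hi⟩
  | @insert φ Φ _ _ ih =>
    intro ψ hψ hi
    obtain ⟨hφ, hdepth⟩ := insert_subset_iff.1 hdepth
    by_cases hiφ : (X i).Models φ
    · obtain ⟨j, ⟨hjψ, hjφ⟩, hj⟩ := ih hdepth (.and ψ φ) (max_le hψ hφ) ⟨hi, hiφ⟩
      exact ⟨j, hjψ, forall_mem_insert.2 ⟨iff_of_true hiφ hjφ, hj⟩⟩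
    · obtain ⟨j, ⟨hjψ, hjφ⟩, hj⟩ := ih hdepth (.and ψ (.not φ)) (max_le hψ hφ) ⟨hi, hiφ⟩
      exact ⟨j, hjψ, forall_mem_insert.2 ⟨iff_of_false hiφ hjφ, hj⟩⟩

theorem exists_sameTheory_of_forall_exists_models [Nonempty κ]
    (h : ∀ ψ : MSO m k l, ψ.depth ≤ n → (∃ i, (X i).Models ψ) → ∃ j, (Y j).Models ψ) (i : ι) :
    ∃ j, (X i).SameTheory n (Y j) := by
  by_cases hψ : ∃ ψ : MSO m k l, ψ.depth ≤ n ∧ (X i).Models ψ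
  · obtain ⟨ψ, hψ, hi⟩ := hψ
    obtain ⟨Φ, hdepth, hΦ, hrep⟩ := exists_finite_representatives.{u} (m := m) n k l
    obtain ⟨j, -, hj⟩ := exists_models_and_agree_of_finite h hΦ hdepth ψ hψ hi
    refine ⟨j, fun φ hφ => ?_⟩
    obtain ⟨χ, hχ, hφχ⟩ := hrep φ hφ
    rw [hφχ (X i), hj χ hχ, hφχ (Y j)]
  -- Without any formula of depth at most `n` there is nothing to check: this is the case of
  -- sentences and `n = 0`.
  · exact ⟨Classical.arbitrary κ, fun φ hφ =>
      absurd ⟨.not φ, hφ, fun hi => hψ ⟨φ, hφ, hi⟩⟩ hψ⟩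

variable {M M' : Interpretation.{u} m k l}

theorem SameTheory.exists_consElem (h : M.SameTheory (n + 1) M') (a : M.carrier) :
    ∃ b, (M.consElem a).SameTheory n (M'.consElem b) := by
  have hexists : ∀ ψ : MSO m (k + 1) l, ψ.depth ≤ n →
      (∃ a, (M.consElem a).Models ψ) → ∃ b, (M'.consElem b).Models ψ :=
    fun ψ hψ => (h (exElem ψ) (Nat.succ_le_succ hψ)).1
  obtain ⟨b, -⟩ := hexists (.eq 0 0) (Nat.zero_le n) ⟨a, rfl⟩
  have : Nonempty M'.carrier := ⟨b⟩
  exact exists_sameTheory_of_forall_exists_models hexists a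

theorem SameTheory.exists_consSet (h : M.SameTheory (n + 1) M') (A : Set M.carrier) :
    ∃ B, (M.consSet A).SameTheory n (M'.consSet B) :=
  exists_sameTheory_of_forall_exists_models (X := M.consSet) (Y := M'.consSet)
    (fun ψ hψ => (h (exSet ψ) (Nat.succ_le_succ hψ)).1) A

end Extension

end Interpretation

end MSO

/-- The second player wins the monadic Ehrenfeucht–Fraïssé game with `n` rounds left, where `R` is
the set of pairs of elements and `S` the set of pairs of sets chosen so far. Unary predicates are
treated as pairs of sets chosen before the game. -/
def BackForth {α : Type u} {β : Type v} [LinearOrder α] [LinearOrder β] :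
    ℕ → Set (α × β) → Set (Set α × Set β) → Prop
  | 0, R, S =>
    (∀ r ∈ R, ∀ q ∈ R, (r.1 < q.1 ↔ r.2 < q.2)) ∧ ∀ r ∈ R, ∀ q ∈ S, (r.1 ∈ q.1 ↔ r.2 ∈ q.2)
  | n + 1, R, S =>
    (∀ a, ∃ b, BackForth n (insert (a, b) R) S) ∧ (∀ b, ∃ a, BackForth n (insert (a, b) R) S) ∧
    (∀ A, ∃ B, BackForth n R (insert (A, B) S)) ∧ (∀ B, ∃ A, BackForth n R (insert (A, B) S))

namespace BackForth

variable {α : Type u} {β : Type v} [LinearOrder α] [LinearOrder β] {n : ℕ}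
  {R R' : Set (α × β)} {S S' : Set (Set α × Set β)}

theorem mono (h : BackForth n R S) (hR : R' ⊆ R) (hS : S' ⊆ S) : BackForth n R' S' := by
  induction n generalizing R R' S S' with
  | zero =>
    exact ⟨fun r hr q hq => h.1 r (hR hr) q (hR hq), fun r hr q hq => h.2 r (hR hr) q (hS hq)⟩
  | succ n ih =>
    obtain ⟨helem, helem', hset, hset'⟩ := h
    exact ⟨fun a => (helem a).imp fun b h => ih h (insert_subset_insert hR) hS,
      fun b => (helem' b).imp fun a h => ih h (insert_subset_insert hR) hS,
      fun A => (hset A).imp fun B h => ih h hR (insert_subset_insert hS),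
      fun B => (hset' B).imp fun A h => ih h hR (insert_subset_insert hS)⟩

theorem of_succ (h : BackForth (n + 1) R S) : BackForth n R S :=
  let ⟨_, hB⟩ := h.2.2.1 ∅
  hB.mono subset_rfl (subset_insert _ _)

theorem zero_of (h : BackForth n R S) : BackForth 0 R S := by
  induction n with
  | zero => exact h
  | succ n ih => exact ih h.of_succ

end BackForth

namespace MSO.Interpretation

variable {m k l n : ℕ}

section Game

/-- The pairs of elements chosen in the game position given by two interpretations. -/
def elemPairs (M : Interpretation.{u} m k l) (M' : Interpretation.{v} m k l) :
    Set (M.carrier × M'.carrier) :=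
  range fun i => (M.elem i, M'.elem i)

/-- The pairs of sets chosen in the game position given by two interpretations, the unary
predicates included. -/
def setPairs (M : Interpretation.{u} m k l) (M' : Interpretation.{v} m k l) :
    Set (Set M.carrier × Set M'.carrier) :=
  range (fun X => (M.set X, M'.set X)) ∪ range fun p => (M.pred p, M'.pred p)

theorem range_prodMk_finCons {α : Type u} {β : Type v} (a : α) (b : β) (f : Fin k → α)
    (g : Fin k → β) :
    range (fun i => ((Fin.cons a f : Fin (k + 1) → α) i, (Fin.cons b g : Fin (k + 1) → β) i)) =
      insert (a, b) (range fun i => (f i, g i)) := by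
  ext r
  simp [Fin.exists_fin_succ, eq_comm]

theorem elemPairs_consElem (M : Interpretation.{u} m k l) (M' : Interpretation.{v} m k l)
    (a : M.carrier) (b : M'.carrier) :
    elemPairs (M.consElem a) (M'.consElem b) = insert (a, b) (elemPairs M M') :=
  range_prodMk_finCons a b M.elem M'.elem

theorem setPairs_consSet (M : Interpretation.{u} m k l) (M' : Interpretation.{v} m k l)
    (A : Set M.carrier) (B : Set M'.carrier) :
    setPairs (M.consSet A) (M'.consSet B) = insert (A, B) (setPairs M M') :=
  (congrArg (· ∪ _) (range_prodMk_finCons A B M.set M'.set)).trans (insert_union ..)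

theorem SameTheory.backForth {M M' : Interpretation.{u} m k l} (h : M.SameTheory n M') :
    BackForth n (elemPairs M M') (setPairs M M') := by
  induction n generalizing k l with
  | zero =>
    refine ⟨?_, ?_⟩
    · rintro _ ⟨i, rfl⟩ _ ⟨j, rfl⟩
      exact h (.lt i j) le_rfl
    · rintro _ ⟨i, rfl⟩ _ (⟨X, rfl⟩ | ⟨p, rfl⟩)
      exacts [h (.mem i X) le_rfl, h (.pred p i) le_rfl]
  | succ n ih =>
    have helem {a b} (hab : (M.consElem a).SameTheory n (M'.consElem b)) :
        BackForth n (insert (a, b) (elemPairs M M')) (setPairs M M') :=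
      elemPairs_consElem M M' a b ▸ ih hab
    have hset {A B} (hAB : (M.consSet A).SameTheory n (M'.consSet B)) :
        BackForth n (elemPairs M M') (insert (A, B) (setPairs M M')) :=
      setPairs_consSet M M' A B ▸ ih hAB
    exact ⟨fun a => (h.exists_consElem a).imp fun b => helem,
      fun b => (h.symm.exists_consElem b).imp fun a hab => helem hab.symm,
      fun A => (h.exists_consSet A).imp fun B => hset,
      fun B => (h.symm.exists_consSet B).imp fun A hAB => hset hAB.symm⟩

theorem sameTheory_of_backForth {M : Interpretation.{u} m k l} {M' : Interpretation.{v} m k l}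
    (h : BackForth n (elemPairs M M') (setPairs M M')) : M.SameTheory n M' := by
  intro φ hφ
  induction φ generalizing n with
  | lt i j => exact h.zero_of.1 _ ⟨i, rfl⟩ _ ⟨j, rfl⟩
  | eq i j =>
    have hlt (i j) : M.elem i < M.elem j ↔ M'.elem i < M'.elem j :=
      h.zero_of.1 _ ⟨i, rfl⟩ _ ⟨j, rfl⟩
    simp only [Models, Sat, le_antisymm_iff, ← not_lt, hlt]
  | mem i X => exact h.zero_of.2 _ ⟨i, rfl⟩ _ (.inl ⟨X, rfl⟩)
  | pred p i => exact h.zero_of.2 _ ⟨i, rfl⟩ _ (.inr ⟨p, rfl⟩)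
  | not φ ih => exact not_congr (ih h hφ)
  | and φ ψ ihφ ihψ =>
    exact and_congr (ihφ h (le_of_max_le_left hφ)) (ihψ h (le_of_max_le_right hφ))
  | exElem φ ih =>
    obtain _ | n := n
    · exact absurd hφ (Nat.not_succ_le_zero _)
    have hφ_iff {a b} (hab : BackForth n (insert (a, b) (elemPairs M M')) (setPairs M M')) :
        (M.consElem a).Models φ ↔ (M'.consElem b).Models φ :=
      ih (elemPairs_consElem M M' a b ▸ hab) (Nat.le_of_succ_le_succ hφ)
    obtain ⟨hforth, hback, -⟩ := h
    exact ⟨fun ⟨a, ha⟩ => (hforth a).imp fun b hab => (hφ_iff hab).1 ha,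
      fun ⟨b, hb⟩ => (hback b).imp fun a hab => (hφ_iff hab).2 hb⟩
  | exSet φ ih =>
    obtain _ | n := n
    · exact absurd hφ (Nat.not_succ_le_zero _)
    have hφ_iff {A B} (hAB : BackForth n (elemPairs M M') (insert (A, B) (setPairs M M'))) :
        (M.consSet A).Models φ ↔ (M'.consSet B).Models φ :=
      ih (setPairs_consSet M M' A B ▸ hAB) (Nat.le_of_succ_le_succ hφ)
    obtain ⟨-, -, hforth, hback⟩ := h
    exact ⟨fun ⟨A, hA⟩ => (hforth A).imp fun B hAB => (hφ_iff hAB).1 hA,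
      fun ⟨B, hB⟩ => (hback B).imp fun A hAB => (hφ_iff hAB).2 hB⟩

end Game

end MSO.Interpretation

/-- The maps `f i` exhibit `α` as the ordered sum of the linear orders `γ i`. Sums are presented by
maps into a given order, rather than as `Σₗ i, γ i`, so that an order can be cut into pieces. -/
structure IsOrderedSum {ι : Type*} [LinearOrder ι] {γ : ι → Type*} [∀ i, LinearOrder (γ i)]
    {α : Type*} [LinearOrder α] (f : ∀ i, γ i → α) : Prop where
  strictMono (i : ι) : StrictMono (f i)
  lt_of_lt {i j : ι} (hij : i < j) (x : γ i) (y : γ j) : f i x < f j y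
  exists_eq (a : α) : ∃ i x, f i x = a

namespace IsOrderedSum

variable {ι : Type*} [LinearOrder ι] {γ δ : ι → Type*} [∀ i, LinearOrder (γ i)]
  [∀ i, LinearOrder (δ i)] {α β : Type*} [LinearOrder α] [LinearOrder β] {f : ∀ i, γ i → α}
  {g : ∀ i, δ i → β}

theorem index_eq (hf : IsOrderedSum f) {i j : ι} {x : γ i} {y : γ j} (h : f i x = f j y) :
    i = j := by
  rcases lt_trichotomy i j with hij | hij | hij
  exacts [absurd h (hf.lt_of_lt hij x y).ne, hij, absurd h (hf.lt_of_lt hij y x).ne']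

theorem preimage_iUnion_image (hf : IsOrderedSum f) (A : ∀ i, Set (γ i)) (i : ι) :
    f i ⁻¹' ⋃ j, f j '' A j = A i := by
  ext x
  simp only [mem_preimage, mem_iUnion]
  constructor
  · rintro ⟨j, y, hy, hyx⟩
    obtain rfl := hf.index_eq hyx
    exact (hf.strictMono j).injective hyx ▸ hy
  · exact fun hx => ⟨i, x, hx, rfl⟩

theorem inclusion_iUnion {D : ι → Set α} (hD : ∀ i j, i < j → ∀ x ∈ D i, ∀ y ∈ D j, x < y) :
    IsOrderedSum fun i => inclusion (subset_iUnion D i) where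
  strictMono _ _ _ hxy := hxy
  lt_of_lt hij x y := hD _ _ hij x x.2 y y.2
  exists_eq := fun ⟨a, ha⟩ =>
    let ⟨i, hi⟩ := mem_iUnion.1 ha
    ⟨i, ⟨a, hi⟩, rfl⟩

/-- The trace on the `i`-th summands of a set of pairs of elements. -/
def localElems (f : ∀ i, γ i → α) (g : ∀ i, δ i → β) (R : Set (α × β)) (i : ι) :
    Set (γ i × δ i) :=
  Prod.map (f i) (g i) ⁻¹' R

/-- The trace on the `i`-th summands of a set of pairs of sets. -/
def localSets (f : ∀ i, γ i → α) (g : ∀ i, δ i → β) (S : Set (Set α × Set β)) (i : ι) :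
    Set (Set (γ i) × Set (δ i)) :=
  Prod.map (preimage (f i)) (preimage (g i)) '' S

variable {n : ℕ} {R : Set (α × β)} {S : Set (Set α × Set β)}

theorem backForth_zero (hf : IsOrderedSum f) (hg : IsOrderedSum g)
    (hR : ∀ r ∈ R, ∃ i x y, r = (f i x, g i y))
    (h : ∀ i, BackForth 0 (localElems f g R i) (localSets f g S i)) : BackForth 0 R S := by
  refine ⟨fun r hr q hq => ?_, fun r hr q hq => ?_⟩
  · obtain ⟨i, x, y, rfl⟩ := hR r hr
    obtain ⟨j, x', y', rfl⟩ := hR q hq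
    rcases lt_trichotomy i j with hij | rfl | hij
    · exact iff_of_true (hf.lt_of_lt hij x x') (hg.lt_of_lt hij y y')
    · simpa only [(hf.strictMono i).lt_iff_lt, (hg.strictMono i).lt_iff_lt] using
        (h i).1 (x, y) hr (x', y') hq
    · exact iff_of_false (hf.lt_of_lt hij x' x).not_gt (hg.lt_of_lt hij y' y).not_gt
  · obtain ⟨i, x, y, rfl⟩ := hR r hr
    exact (h i).2 (x, y) hr _ (mem_image_of_mem _ hq)

theorem backForth_localElems_insert (hf : IsOrderedSum f) (hg : IsOrderedSum g)
    (h : ∀ j, BackForth (n + 1) (localElems f g R j) (localSets f g S j)) {i : ι} {x : γ i}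
    {y : δ i} (hxy : BackForth n (insert (x, y) (localElems f g R i)) (localSets f g S i)) (j : ι) :
    BackForth n (localElems f g (insert (f i x, g i y) R) j) (localSets f g S j) := by
  obtain rfl | hij := eq_or_ne i j
  · refine hxy.mono ?_ subset_rfl
    rintro p (hp | hp)
    · exact .inl (((hf.strictMono i).injective.prodMap (hg.strictMono i).injective) hp)
    · exact .inr hp
  · refine (h j).of_succ.mono ?_ subset_rfl
    rintro p (hp | hp)
    · exact absurd (hf.index_eq (congrArg Prod.fst hp)).symm hij
    · exact hp

theorem backForth (hf : IsOrderedSum f) (hg : IsOrderedSum g)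
    (hR : ∀ r ∈ R, ∃ i x y, r = (f i x, g i y))
    (h : ∀ i, BackForth n (localElems f g R i) (localSets f g S i)) : BackForth n R S := by
  induction n generalizing R S with
  | zero => exact hf.backForth_zero hg hR h
  | succ n ih =>
    have helem {i} {x : γ i} {y : δ i}
        (hxy : BackForth n (insert (x, y) (localElems f g R i)) (localSets f g S i)) :
        BackForth n (insert (f i x, g i y) R) S :=
      ih (forall_mem_insert.2 ⟨⟨i, x, y, rfl⟩, hR⟩) (hf.backForth_localElems_insert hg h hxy)
    have hset {A : Set α} {B : Set β} (hAB : ∀ i,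
        BackForth n (localElems f g R i) (insert (f i ⁻¹' A, g i ⁻¹' B) (localSets f g S i))) :
        BackForth n R (insert (A, B) S) :=
      ih hR fun i => by
        rw [localSets, image_insert_eq]
        exact hAB i
    refine ⟨fun a => ?_, fun b => ?_, fun A => ?_, fun B => ?_⟩
    · obtain ⟨i, x, rfl⟩ := hf.exists_eq a
      obtain ⟨y, hxy⟩ := (h i).1 x
      exact ⟨g i y, helem hxy⟩
    · obtain ⟨i, y, rfl⟩ := hg.exists_eq b
      obtain ⟨x, hxy⟩ := (h i).2.1 y
      exact ⟨f i x, helem hxy⟩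
    · choose B hB using fun i => (h i).2.2.1 (f i ⁻¹' A)
      exact ⟨⋃ i, g i '' B i, hset fun i => (hg.preimage_iUnion_image B i).symm ▸ hB i⟩
    · choose A hA using fun i => (h i).2.2.2 (g i ⁻¹' B)
      exact ⟨⋃ i, f i '' A i, hset fun i => (hf.preimage_iUnion_image A i).symm ▸ hA i⟩

end IsOrderedSum

open MSO.Interpretation in
theorem IsOrderedSum.sameTheory {ι : Type*} [LinearOrder ι] {γ δ : ι → Type u}
    [∀ i, LinearOrder (γ i)] [∀ i, LinearOrder (δ i)] {α : Type v} {β : Type w} [LinearOrder α]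
    [LinearOrder β] {f : ∀ i, γ i → α} {g : ∀ i, δ i → β} (hf : IsOrderedSum f)
    (hg : IsOrderedSum g) {m n : ℕ} {P : Fin m → Set α} {Q : Fin m → Set β}
    (h : ∀ i, (ofPred fun p => f i ⁻¹' P p).SameTheory n (ofPred fun p => g i ⁻¹' Q p)) :
    (ofPred P).SameTheory n (ofPred Q) := by
  refine sameTheory_of_backForth (hf.backForth hg ?_ fun i => (h i).backForth.mono ?_ ?_)
  · rintro _ ⟨i, -⟩
    exact i.elim0
  · rintro _ ⟨i, -⟩
    exact i.elim0
  · rintro _ ⟨_, ⟨X, -⟩ | ⟨p, rfl⟩, rfl⟩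
    exacts [X.elim0, .inr ⟨p, rfl⟩]

section CountableCofinality

theorem exists_isCofinal_wellFoundedLT (α : Type u) [LinearOrder α] :
    ∃ s : Set α, IsCofinal s ∧ WellFoundedLT s := by
  -- The records of an arbitrary well-ordering of `α`: on them it agrees with `<`.
  let s : Set α := {a | ∀ b, WellOrderingRel b a → b < a}
  have hs : ∀ x y : s, x < y → WellOrderingRel x.1 y.1 := by
    intro x y hxy
    rcases trichotomous_of WellOrderingRel x.1 y.1 with h | h | h
    exacts [h, absurd h (Subtype.coe_lt_coe.2 hxy).ne, absurd (x.2 y h) hxy.not_gt]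
  exact ⟨s, isCofinal_setOfPred_imp_lt WellOrderingRel,
    ⟨Subrelation.wf (hs _ _) (InvImage.wf Subtype.val WellOrderingRel.isWellOrder.wf)⟩⟩

variable {α : Type u} [LinearOrder α]

open Ordinal in
theorem countable_of_not_exists_strictMono_aleph_one [WellFoundedLT α]
    (h : ¬ ∃ f : Iio (Cardinal.aleph.{v} 1).ord → α, StrictMono f) : Countable α := by
  by_contra hα
  have hle : (Cardinal.aleph.{u} 1).ord ≤ typeLT α := by
    rw [Cardinal.ord_le, card_type, ← Cardinal.succ_aleph0, Order.succ_le_iff]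
    exact not_le.1 (mt Cardinal.mk_le_aleph0_iff.1 hα)
  have hlift : lift.{u, v + 1} (typeLT (Iio (Cardinal.aleph.{v} 1).ord)) ≤
      lift.{v + 1, u} (typeLT α) := by
    refine le_trans (le_of_eq ?_) (lift_le.2 hle)
    simp [Cardinal.ord_aleph]
  obtain ⟨f⟩ := lift_type_le.{v + 1, u, 0}.1 hlift
  exact h ⟨f, fun _ _ => f.map_rel_iff.2⟩

theorem isCountablyGenerated_atTop_of_not_exists_strictMono_aleph_one
    (h : ¬ ∃ f : Iio (Cardinal.aleph.{v} 1).ord → α, StrictMono f) :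
    (atTop : Filter α).IsCountablyGenerated := by
  cases isEmpty_or_nonempty α
  · infer_instance
  obtain ⟨s, hs, _⟩ := exists_isCofinal_wellFoundedLT α
  have : Countable s := countable_of_not_exists_strictMono_aleph_one fun ⟨f, hf⟩ =>
    h ⟨fun i => f i, hf⟩
  have hbasis : (atTop : Filter α).HasBasis (· ∈ s) Ici :=
    atTop_basis.to_hasBasis (fun a _ => (hs a).imp fun _ => And.imp_right Ici_subset_Ici.2)
      fun a _ => ⟨a, trivial, subset_rfl⟩
  exact HasCountableBasis.isCountablyGenerated ⟨hbasis, to_countable s⟩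

theorem isCountablyGenerated_atBot_of_not_exists_strictAnti_aleph_one
    (h : ¬ ∃ f : Iio (Cardinal.aleph.{v} 1).ord → α, StrictAnti f) :
    (atBot : Filter α).IsCountablyGenerated :=
  isCountablyGenerated_atTop_of_not_exists_strictMono_aleph_one (α := αᵒᵈ) h

end CountableCofinality

section IntSequences

theorem exists_nat_strictMono_tendsto_atTop (α : Type*) [LinearOrder α] [Nonempty α]
    [NoMaxOrder α] [(atTop : Filter α).IsCountablyGenerated] :
    ∃ c : ℕ → α, StrictMono c ∧ Tendsto c atTop atTop := by
  obtain ⟨c, hc⟩ := exists_seq_tendsto (atTop : Filter α)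
  obtain ⟨φ, hφ, hcφ⟩ := strictMono_subseq_of_tendsto_atTop hc
  exact ⟨c ∘ φ, hcφ, hc.comp hφ.tendsto_atTop⟩

theorem exists_int_strictMono_tendsto (α : Type*) [LinearOrder α] [Nonempty α] [NoMaxOrder α]
    [NoMinOrder α] [(atTop : Filter α).IsCountablyGenerated]
    [(atBot : Filter α).IsCountablyGenerated] :
    ∃ c : ℤ → α, StrictMono c ∧ Tendsto c atTop atTop ∧ Tendsto c atBot atBot := by
  obtain ⟨a, ha, ha_top⟩ := exists_nat_strictMono_tendsto_atTop α
  obtain ⟨b, hb, hb_bot⟩ : ∃ b : ℕ → α, StrictAnti b ∧ Tendsto b atTop atBot :=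
    exists_nat_strictMono_tendsto_atTop αᵒᵈ
  obtain ⟨k, hk⟩ := (hb_bot.eventually (eventually_lt_atBot (a 0))).exists
  let c : ℤ → α := fun i => Int.casesOn i a fun j => b (j + k)
  have hc : StrictMono c := by
    refine strictMono_int_of_lt_succ ?_
    rintro (i | _ | i)
    · exact ha i.lt_succ_self
    · change b (0 + k) < a 0
      rwa [zero_add]
    · exact hb (by lia)
  refine ⟨c, hc, tendsto_atTop_atTop_of_monotone hc.monotone fun x => ?_,
    tendsto_atBot_atBot_of_monotone hc.monotone fun x => ?_⟩
  · obtain ⟨i, hi⟩ := (ha_top.eventually_ge_atTop x).exists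
    exact ⟨i, hi⟩
  · obtain ⟨j, hj⟩ := (hb_bot.eventually_le_atBot x).exists
    exact ⟨Int.negSucc j, (hb.antitone (Nat.le_add_right j k)).trans hj⟩

variable {α : Type*} [LinearOrder α]

theorem exists_int_strictMono_tendsto_of_dense [Nonempty α] [NoMaxOrder α] [NoMinOrder α]
    [(atTop : Filter α).IsCountablyGenerated] [(atBot : Filter α).IsCountablyGenerated]
    {I : Set α} (hI : ∀ x y, x < y → ∃ z ∈ I, x < z ∧ z < y) :
    ∃ c : ℤ → α, StrictMono c ∧ (∀ i, c i ∈ I) ∧ Tendsto c atTop atTop ∧ Tendsto c atBot atBot := by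
  obtain ⟨c, hc, hc_top, hc_bot⟩ := exists_int_strictMono_tendsto α
  choose d hdI hcd hdc using fun i => hI (c i) (c (i + 1)) (hc (lt_add_one i))
  exact ⟨d, strictMono_int_of_lt_succ fun i => (hdc i).trans (hcd (i + 1)), hdI,
    tendsto_atTop_mono (fun i => (hcd i).le) hc_top, tendsto_atBot_mono (fun i => (hdc i).le)
      (hc_bot.comp (tendsto_atBot_add_const_right atBot 1 tendsto_id))⟩

theorem exists_mem_Ico_int_of_tendsto [NoMaxOrder α] {c : ℤ → α} (h_top : Tendsto c atTop atTop)
    (h_bot : Tendsto c atBot atBot) (x : α) : ∃ i, x ∈ Ico (c i) (c (i + 1)) := by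
  obtain ⟨b, hb⟩ := eventually_atTop.1 (h_top.eventually_gt_atTop x)
  have hbdd : ∀ i, c i ≤ x → i ≤ b := fun i hi => le_of_not_ge fun hbi => (hb i hbi).not_ge hi
  obtain ⟨i, hi, hmax⟩ :=
    Int.exists_greatest_of_bdd ⟨b, hbdd⟩ (h_bot.eventually_le_atBot x).exists
  exact ⟨i, hi, lt_of_not_ge fun h => (lt_add_one i).not_ge (hmax _ h)⟩

theorem lt_of_mem_Ico_int_of_lt {c : ℤ → α} (hc : Monotone c) {i j : ℤ} (hij : i < j) {x y : α}
    (hx : x ∈ Ico (c i) (c (i + 1))) (hy : y ∈ Ico (c j) (c (j + 1))) : x < y :=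
  hx.2.trans_le ((hc (Int.add_one_le_of_lt hij)).trans hy.1)

theorem exists_int_iUnion_Ico_eq_of_ordConnected
    (hω : ¬ ∃ f : Iio (Cardinal.aleph.{v} 1).ord → α, StrictMono f)
    (hω' : ¬ ∃ f : Iio (Cardinal.aleph.{w} 1).ord → α, StrictAnti f)
    {I J : Set α} (hI : ∀ x y, x < y → ∃ z ∈ I, x < z ∧ z < y) (hconv : J.OrdConnected)
    (hne : J.Nonempty) (hbot : ∀ x ∈ J, ∃ y ∈ J, y < x) (htop : ∀ x ∈ J, ∃ y ∈ J, x < y) :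
    ∃ c : ℤ → α, StrictMono c ∧ (∀ i, c i ∈ I) ∧ ⋃ i, Ico (c i) (c (i + 1)) = J := by
  have : Nonempty J := hne.to_subtype
  have : NoMaxOrder J := ⟨fun x => let ⟨y, hy, hxy⟩ := htop x x.2; ⟨⟨y, hy⟩, hxy⟩⟩
  have : NoMinOrder J := ⟨fun x => let ⟨y, hy, hyx⟩ := hbot x x.2; ⟨⟨y, hy⟩, hyx⟩⟩
  have : (atTop : Filter J).IsCountablyGenerated :=
    isCountablyGenerated_atTop_of_not_exists_strictMono_aleph_one fun ⟨f, hf⟩ =>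
      hω ⟨fun i => f i, hf⟩
  have : (atBot : Filter J).IsCountablyGenerated :=
    isCountablyGenerated_atBot_of_not_exists_strictAnti_aleph_one fun ⟨f, hf⟩ =>
      hω' ⟨fun i => f i, hf⟩
  have hIJ : ∀ x y : J, x < y → ∃ z ∈ Subtype.val ⁻¹' I, x < z ∧ z < y := fun x y hxy =>
    let ⟨z, hz, hxz, hzy⟩ := hI x y hxy
    ⟨⟨z, hconv.out x.2 y.2 ⟨hxz.le, hzy.le⟩⟩, hz, hxz, hzy⟩
  obtain ⟨c, hc, hcI, hc_top, hc_bot⟩ := exists_int_strictMono_tendsto_of_dense hIJ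
  refine ⟨fun i => c i, hc, hcI, Subset.antisymm (iUnion_subset fun i => ?_) fun x hx => ?_⟩
  · exact Ico_subset_Icc_self.trans (hconv.out (c i).2 (c (i + 1)).2)
  · exact mem_iUnion.2 (exists_mem_Ico_int_of_tendsto hc_top hc_bot ⟨x, hx⟩)

end IntSequences

/-- (Shelah, Lemma 5.3.) Let `N` be a dense linear order embedding neither `ω₁` nor
`ω₁*`, `I ⊆ N` dense, such that all restrictions `(N,P̄)↾[a,b)` for `a < b` in `I` have
the same monadic theory up to depth `n`. Then any two nonempty convex subsets of `N`
with no first and no last element have the same monadic theory up to depth `n`. -/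
theorem convex_pieces_same_theory
    (N : Type) [LinearOrder N] [DenselyOrdered N]
    (h1 : ¬ ∃ f : ↥(Set.Iio (Cardinal.aleph 1).ord) → N, StrictMono f)
    (h2 : ¬ ∃ f : ↥(Set.Iio (Cardinal.aleph 1).ord) → N, StrictAnti f)
    (m : ℕ) (P : Fin m → Set N) (I : Set N)
    (hIdense : ∀ x y : N, x < y → ∃ z ∈ I, x < z ∧ z < y)
    (n : ℕ)
    (hconst : ∀ a ∈ I, ∀ b ∈ I, ∀ a' ∈ I, ∀ b' ∈ I, a < b → a' < b' →
      ∀ φ : MSO m 0 0, φ.depth ≤ n →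
        (MSO.SatS (restrictPred P (Set.Ico a b)) φ ↔
         MSO.SatS (restrictPred P (Set.Ico a' b')) φ)) :
    ∀ J₁ J₂ : Set N, J₁.Nonempty → J₂.Nonempty →
      (∀ x ∈ J₁, ∀ y ∈ J₁, ∀ z : N, x ≤ z → z ≤ y → z ∈ J₁) →
      (∀ x ∈ J₂, ∀ y ∈ J₂, ∀ z : N, x ≤ z → z ≤ y → z ∈ J₂) →
      (∀ x ∈ J₁, ∃ y ∈ J₁, y < x) → (∀ x ∈ J₁, ∃ y ∈ J₁, x < y) →
      (∀ x ∈ J₂, ∃ y ∈ J₂, y < x) → (∀ x ∈ J₂, ∃ y ∈ J₂, x < y) →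
      ∀ φ : MSO m 0 0, φ.depth ≤ n →
        (MSO.SatS (restrictPred P J₁) φ ↔ MSO.SatS (restrictPred P J₂) φ) := by
  intro J₁ J₂ hne₁ hne₂ hconv₁ hconv₂ hbot₁ htop₁ hbot₂ htop₂
  have hJ₁ : J₁.OrdConnected := ⟨fun x hx y hy z hz => hconv₁ x hx y hy z hz.1 hz.2⟩
  have hJ₂ : J₂.OrdConnected := ⟨fun x hx y hy z hz => hconv₂ x hx y hy z hz.1 hz.2⟩
  obtain ⟨c, hc, hcI, rfl⟩ :=
    exists_int_iUnion_Ico_eq_of_ordConnected h1 h2 hIdense hJ₁ hne₁ hbot₁ htop₁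
  obtain ⟨d, hd, hdI, rfl⟩ :=
    exists_int_iUnion_Ico_eq_of_ordConnected h1 h2 hIdense hJ₂ hne₂ hbot₂ htop₂
  have hsum {c : ℤ → N} (hc : StrictMono c) :
      IsOrderedSum fun i => inclusion (subset_iUnion (fun i => Ico (c i) (c (i + 1))) i) :=
    .inclusion_iUnion fun _ _ hij _ hx _ hy => lt_of_mem_Ico_int_of_lt hc.monotone hij hx hy
  exact (hsum hc).sameTheory (hsum hd) fun i => hconst _ (hcI i) _ (hcI (i + 1)) _ (hdI i) _
    (hdI (i + 1)) (hc (lt_add_one i)) (hd (lt_add_one i))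
end
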